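/- arXiv:0912.5224 — 7 statements merged into one kernel-verified Lean document; each statement's English description precedes it below -/
import Mathlib

section
/- Fix u ∈ L_M and assume A1. If x ∈ E minimizes J_u over E (i.e. J_u(x) = inf_{y∈E} J_u(y)), then x solves problem (P_u): p(k+1)(x(k+1) − x(k)) − p(k)(x(k) − x(k−1)) + f(k,x(k),u(k)) = g(k) for all k = 1,...,T, with x(0) = x(T+1) = 0. -/
/-!
The space `E` is linear, so for every direction `h ∈ E` the function `t ↦ J_u(x + t h)` has a global
minimum at `t = 0`. It is differentiable there: the quadratic and linear parts are polynomials in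
`t`, and `s ↦ F(k,s,v)` has derivative `f(k,s,v)` by the fundamental theorem of calculus
(`hasDerivAt_Fint`). By Fermat's theorem the first variation (`hasDerivAt_J`) therefore vanishes.
For `h` the unit vector at `k` only the `k`-th and `(k+1)`-th quadratic terms contribute
(`sum_mul_single_sub`), and the vanishing first variation is exactly the difference equation at `k`.
-/

open Finset Filter Topology

/-- Membership in the space `E` of functions `x : {0,…,T+1} → ℝ` with zero boundary values. -/
def inE (T : ℕ) (x : ℕ → ℝ) : Prop := x 0 = 0 ∧ x (T + 1) = 0

/-- The norm `‖x‖ = (∑_{k=1}^{T} (x(k+1) − x(k))²)^{1/2}` on `E`. -/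
noncomputable def normE (T : ℕ) (x : ℕ → ℝ) : ℝ :=
  Real.sqrt (∑ k ∈ Finset.Icc 1 T, (x (k + 1) - x k) ^ 2)

/-- The Euclidean norm `|x| = (∑_{k=1}^{T} x(k)²)^{1/2}`. -/
noncomputable def euclE (T : ℕ) (x : ℕ → ℝ) : ℝ :=
  Real.sqrt (∑ k ∈ Finset.Icc 1 T, (x k) ^ 2)

/-- Membership in the parameter set `L_M`. -/
def inLM (T : ℕ) (M : ℝ) (u : ℕ → ℝ) : Prop :=
  ∀ k ∈ Finset.Icc 1 T, |u k| ≤ M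

/-- `F(k,s,v) = ∫₀^s f(k,t,v) dt`. -/
noncomputable def Fint (f : ℕ → ℝ → ℝ → ℝ) (k : ℕ) (s v : ℝ) : ℝ :=
  ∫ t in (0:ℝ)..s, f k t v

/-- The action functional `J_u`. -/
noncomputable def J (T : ℕ) (p g : ℕ → ℝ) (f : ℕ → ℝ → ℝ → ℝ) (u x : ℕ → ℝ) : ℝ :=
  (∑ k ∈ Finset.Icc 1 (T + 1), p k / 2 * (x k - x (k - 1)) ^ 2)
    - (∑ k ∈ Finset.Icc 1 T, Fint f k (x k) (u k))
    + ∑ k ∈ Finset.Icc 1 T, g k * x k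

/-- `x` solves problem `(P_u)`. -/
def SolvesP (T : ℕ) (p g : ℕ → ℝ) (f : ℕ → ℝ → ℝ → ℝ) (u x : ℕ → ℝ) : Prop :=
  inE T x ∧ ∀ k ∈ Finset.Icc 1 T,
    p (k + 1) * (x (k + 1) - x k) - p k * (x k - x (k - 1)) + f k (x k) (u k) = g k

/-- Assumption A1: `f(k,·,·)` continuous on `ℝ × [−M,M]` for each `k = 1,…,T`. -/
def A1 (T : ℕ) (M : ℝ) (f : ℕ → ℝ → ℝ → ℝ) : Prop :=
  ∀ k ∈ Finset.Icc 1 T,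
    ContinuousOn (fun q : ℝ × ℝ => f k q.1 q.2) (Set.univ ×ˢ Set.Icc (-M) M)

/-- Assumption A2. -/
def A2 (T : ℕ) (M : ℝ) (f : ℕ → ℝ → ℝ → ℝ) : Prop :=
  ∃ α > 0, ∀ k ∈ Finset.Icc 1 T, ∀ y v : ℝ, α ≤ |y| → |v| ≤ M → y * f k y v ≤ 0

/-- `m = min_{1≤k≤T+1} p(k)`. -/
noncomputable def mmin (T : ℕ) (p : ℕ → ℝ) : ℝ :=
  (Finset.Icc 1 (T + 1)).inf' (Finset.nonempty_Icc.mpr (Nat.le_add_left 1 T)) p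

/-- Assumption A3: `m = min_{1≤k≤T+1} p(k) > 0`. -/
def A3 (T : ℕ) (p : ℕ → ℝ) : Prop := 0 < mmin T p

/-- Assumption A5. -/
def A5 (T : ℕ) (M : ℝ) (f : ℕ → ℝ → ℝ → ℝ) (g : ℕ → ℝ) : Prop :=
  (∀ k ∈ Finset.Icc 1 T, ∀ y v : ℝ, |v| ≤ M → 0 ≤ f k y v - g k) ∧
    ∃ k₁ ∈ Finset.Icc 1 T, ∀ y v : ℝ, |v| ≤ M → 0 < f k₁ y v - g k₁


lemma hasDerivAt_Fint {T : ℕ} {M : ℝ} {f : ℕ → ℝ → ℝ → ℝ} (hA1 : A1 T M f) {k : ℕ}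
    (hk : k ∈ Finset.Icc 1 T) {v : ℝ} (hv : |v| ≤ M) (s : ℝ) :
    HasDerivAt (fun s => Fint f k s v) (f k s v) s := by
  have hc : Continuous fun t => f k t v :=
    (hA1 k hk).comp_continuous (f := fun t : ℝ => (t, v)) (by fun_prop)
      fun t => ⟨Set.mem_univ _, abs_le.mp hv⟩
  exact (hc.integral_hasStrictDerivAt 0 s).hasDerivAt

/-- The first variation of `J_u` at `x` in the direction `h`. -/
lemma hasDerivAt_J {T : ℕ} {M : ℝ} {f : ℕ → ℝ → ℝ → ℝ} (p g : ℕ → ℝ) (hA1 : A1 T M f)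
    {u : ℕ → ℝ} (hu : inLM T M u) (x h : ℕ → ℝ) :
    HasDerivAt (fun t : ℝ => J T p g f u (fun j => x j + t * h j))
      ((∑ j ∈ Finset.Icc 1 (T + 1), p j * (x j - x (j - 1)) * (h j - h (j - 1)))
        - (∑ j ∈ Finset.Icc 1 T, f j (x j) (u j) * h j)
        + ∑ j ∈ Finset.Icc 1 T, g j * h j) 0 := by
  have hlin : ∀ j, HasDerivAt (fun t : ℝ => x j + t * h j) (h j) 0 := fun j => by
    simpa using ((hasDerivAt_id (0 : ℝ)).mul_const (h j)).const_add (x j)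
  unfold J
  refine ((HasDerivAt.fun_sum fun j _ => ?_).sub (HasDerivAt.fun_sum fun j hj => ?_)).add
    (HasDerivAt.fun_sum fun j _ => (hlin j).const_mul (g j))
  · refine HasDerivAt.congr_deriv
      ((((hlin j).fun_sub (hlin (j - 1))).fun_pow 2).const_mul (p j / 2)) ?_
    simp only [zero_mul, add_zero]
    norm_num
    ring
  · have hF := hasDerivAt_Fint hA1 hj (hu j hj) (x j + 0 * h j)
    have hcomp := hF.comp (0 : ℝ) (hlin j)
    simpa [Function.comp_def] using hcomp

/-- Summation by parts against the unit vector at an interior point `k`. -/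
lemma sum_mul_single_sub {T k : ℕ} (hk : k ∈ Finset.Icc 1 T) (c : ℕ → ℝ) :
    ∑ j ∈ Finset.Icc 1 (T + 1),
      c j * ((Pi.single k 1 : ℕ → ℝ) j - (Pi.single k 1 : ℕ → ℝ) (j - 1)) = c k - c (k + 1) := by
  obtain ⟨h1, h2⟩ := Finset.mem_Icc.mp hk
  have hterm : ∀ j ∈ Finset.Icc 1 (T + 1),
      c j * ((Pi.single k 1 : ℕ → ℝ) j - (Pi.single k 1 : ℕ → ℝ) (j - 1))
        = (if j = k then c j else 0) - (if j = k + 1 then c j else 0) := by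
    intro j hj
    have hj1 := (Finset.mem_Icc.mp hj).1
    -- the truncated `j - 1` is the true predecessor because `1 ≤ j`
    have hiff : j - 1 = k ↔ j = k + 1 := by omega
    simp only [Pi.single_apply, hiff]
    split_ifs <;> simp
  rw [Finset.sum_congr rfl hterm, Finset.sum_sub_distrib, Finset.sum_ite_eq', Finset.sum_ite_eq',
    if_pos (Finset.mem_Icc.mpr ⟨h1, by omega⟩), if_pos (Finset.mem_Icc.mpr ⟨by omega, by omega⟩)]

/-- any minimizer of `J_u` over `E` solves problem `(P_u)`. -/
theorem minimizer_solves (T : ℕ) (hT : 1 ≤ T) (M : ℝ) (hM : 0 < M)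
    (f : ℕ → ℝ → ℝ → ℝ) (p g : ℕ → ℝ) (hA1 : A1 T M f)
    (u : ℕ → ℝ) (hu : inLM T M u)
    (x : ℕ → ℝ) (hx : inE T x)
    (hmin : ∀ y : ℕ → ℝ, inE T y → J T p g f u x ≤ J T p g f u y) :
    SolvesP T p g f u x := by
  refine ⟨hx, fun k hk => ?_⟩
  obtain ⟨h1, h2⟩ := Finset.mem_Icc.mp hk
  have hderiv := hasDerivAt_J p g hA1 hu x (Pi.single k 1)
  have hloc : IsLocalMin
      (fun t : ℝ => J T p g f u (fun j => x j + t * (Pi.single k 1 : ℕ → ℝ) j)) 0 := by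
    refine Filter.Eventually.of_forall fun t => ?_
    have hE : inE T (fun j => x j + t * (Pi.single k 1 : ℕ → ℝ) j) := by
      have hk0 : (0 : ℕ) ≠ k := by omega
      have hkT : T + 1 ≠ k := by omega
      simp [inE, hk0, hkT, hx.1, hx.2]
    simpa using hmin _ hE
  have hzero := hloc.hasDerivAt_eq_zero hderiv
  rw [sum_mul_single_sub hk (fun j => p j * (x j - x (j - 1)))] at hzero
  simp only [Pi.single_apply, mul_ite, mul_one, mul_zero, Finset.sum_ite_eq', if_pos hk,
    Nat.add_sub_cancel] at hzero
  linarith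
end

section
/- Assume A1, A2 and A3. Then for every u ∈ L_M the functional J_u attains its infimum over E: there exists x ∈ E with J_u(x) = inf_{y∈E} J_u(y), and every such minimizer x solves problem (P_u). In particular problem (P_u) has at least one solution for every u ∈ L_M. -/
/-!
Only the values of `x` at `1, …, T` matter, so the claim is about a `C¹` function on `ℝᵀ`.
The sign condition A2 makes `s ↦ ∫₀^s f(k,t,u(k)) dt` nondecreasing on `(-∞,-α]` and
nonincreasing on `[α,∞)`, hence bounded above (`primitive_bddAbove`). Since the boundary values
vanish, every `x(k)²` is at most `(T+1) ∑ (x(j) - x(j-1))²` (`sq_le_sum_sq_diff`), so the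
quadratic part, whose coefficients are at least `m > 0`, dominates the linear term `∑ g(k) x(k)`
and the sublevel set `{J ≤ 0}`, which contains `0`, is bounded (`sublevel_bounded`). Continuity on
a compact box gives a minimizer. At a minimizer the derivative of `J` in the `k`-th coordinate
vanishes (`hasDerivAt_J_update`), and this is exactly the `k`-th equation of `(P_u)`.
-/

open Finset Filter Topology

/-! ### Two inequalities -/

/-- A primitive of a continuous function pointing inwards outside `(-α, α)` is bounded above. -/
lemma primitive_bddAbove {φ : ℝ → ℝ} (hφ : Continuous φ) {α : ℝ} (hα : 0 < α)
    (h : ∀ y, α ≤ |y| → y * φ y ≤ 0) : ∃ C, ∀ s, ∫ t in (0:ℝ)..s, φ t ≤ C := by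
  have hint : ∀ a b, IntervalIntegrable φ MeasureTheory.volume a b :=
    fun a b => hφ.intervalIntegrable a b
  have hcont : Continuous fun s => ∫ t in (0:ℝ)..s, φ t :=
    intervalIntegral.continuous_primitive hint 0
  obtain ⟨C, hC⟩ := (isCompact_Icc (a := -α) (b := α)).bddAbove_image hcont.continuousOn
  have hC' : ∀ s ∈ Set.Icc (-α) α, ∫ t in (0:ℝ)..s, φ t ≤ C :=
    fun s hs => hC (Set.mem_image_of_mem _ hs)
  refine ⟨C, fun s => ?_⟩
  rcases le_total s (-α) with h1 | h1
  · have e := intervalIntegral.integral_add_adjacent_intervals (hint 0 s) (hint s (-α))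
    have n : 0 ≤ ∫ t in s..(-α), φ t := by
      refine intervalIntegral.integral_nonneg h1 fun t ht => ?_
      have := h t (by rw [abs_of_nonpos (by linarith [ht.2])]; linarith [ht.2])
      nlinarith [ht.2]
    linarith [hC' (-α) ⟨le_rfl, by linarith⟩]
  rcases le_total s α with h2 | h2
  · exact hC' s ⟨h1, h2⟩
  · have e := intervalIntegral.integral_add_adjacent_intervals (hint 0 α) (hint α s)
    have n : 0 ≤ ∫ t in α..s, -φ t := by
      refine intervalIntegral.integral_nonneg h2 fun t ht => ?_
      have := h t (by rw [abs_of_nonneg (by linarith [ht.1])]; linarith [ht.1])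
      nlinarith [ht.1]
    rw [intervalIntegral.integral_neg] at n
    linarith [hC' α ⟨by linarith, le_rfl⟩]

/-- Discrete Poincaré inequality: telescoping from `x 0 = 0` and Cauchy–Schwarz. -/
lemma sq_le_sum_sq_diff {T : ℕ} {x : ℕ → ℝ} (h0 : x 0 = 0) {k : ℕ} (hk : k ≤ T) :
    x k ^ 2 ≤ (T + 1) * ∑ j ∈ Finset.Icc 1 (T + 1), (x j - x (j - 1)) ^ 2 := by
  have hIcc : ∑ j ∈ Finset.Icc 1 (T + 1), (x j - x (j - 1)) ^ 2
      = ∑ j ∈ Finset.range (T + 1), (x (j + 1) - x j) ^ 2 := by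
    rw [← Finset.Ico_add_one_right_eq_Icc, Finset.sum_Ico_eq_sum_range]
    refine Finset.sum_congr (by simp) fun j _ => ?_
    simp [add_comm]
  rw [hIcc]
  calc x k ^ 2 = (∑ j ∈ Finset.range k, (x (j + 1) - x j)) ^ 2 := by
        rw [Finset.sum_range_sub, h0, sub_zero]
    _ ≤ (Finset.range k).card * ∑ j ∈ Finset.range k, (x (j + 1) - x j) ^ 2 :=
        sq_sum_le_card_mul_sum_sq
    _ ≤ _ := by
        rw [Finset.card_range]
        have hk' : (k : ℝ) ≤ T + 1 := by exact_mod_cast hk.trans (Nat.le_succ T)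
        refine mul_le_mul hk' (Finset.sum_le_sum_of_subset_of_nonneg ?_ fun _ _ _ => sq_nonneg _)
          (Finset.sum_nonneg fun _ _ => sq_nonneg _) (by positivity)
        exact Finset.range_subset_range.2 (hk.trans (Nat.le_succ T))

/-! ### Continuity and coercivity of the action functional -/

lemma continuous_slice {T : ℕ} {M : ℝ} {f : ℕ → ℝ → ℝ → ℝ} (hA1 : A1 T M f) {u : ℕ → ℝ}
    (hu : inLM T M u) {k : ℕ} (hk : k ∈ Finset.Icc 1 T) : Continuous fun t => f k t (u k) :=
  (hA1 k hk).comp_continuous (f := fun t : ℝ => (t, u k)) (by fun_prop)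
    fun _ => ⟨Set.mem_univ _, abs_le.1 (hu k hk)⟩

lemma continuous_J {T : ℕ} {M : ℝ} {f : ℕ → ℝ → ℝ → ℝ} (p g : ℕ → ℝ) (hA1 : A1 T M f)
    {u : ℕ → ℝ} (hu : inLM T M u) : Continuous (J T p g f u) := by
  have hF : ∀ k ∈ Finset.Icc 1 T, Continuous fun x : ℕ → ℝ => Fint f k (x k) (u k) := by
    intro k hk
    exact (intervalIntegral.continuous_primitive
      (fun a b => (continuous_slice hA1 hu hk).intervalIntegrable a b) 0).comp (continuous_apply k)
  unfold J
  refine ((continuous_finsetSum _ fun k _ => by fun_prop).sub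
    (continuous_finsetSum _ hF)).add (continuous_finsetSum _ fun k _ => by fun_prop)

lemma J_congr {T : ℕ} {p g : ℕ → ℝ} {f : ℕ → ℝ → ℝ → ℝ} {u x y : ℕ → ℝ}
    (h : ∀ k ≤ T + 1, x k = y k) : J T p g f u x = J T p g f u y := by
  unfold J
  congr 1
  · congr 1
    · refine Finset.sum_congr rfl fun k hk => ?_
      rw [Finset.mem_Icc] at hk
      rw [h k hk.2, h (k - 1) (by omega)]
    · refine Finset.sum_congr rfl fun k hk => ?_
      rw [Finset.mem_Icc] at hk
      rw [h k (by omega)]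
  · refine Finset.sum_congr rfl fun k hk => ?_
    rw [Finset.mem_Icc] at hk
    rw [h k (by omega)]

/-- Coercivity of `J`, in the form needed for existence of a minimizer. -/
lemma sublevel_bounded {T : ℕ} (hT : 1 ≤ T) {M : ℝ} {f : ℕ → ℝ → ℝ → ℝ} {p g : ℕ → ℝ}
    (hA1 : A1 T M f) (hA2 : A2 T M f) (hA3 : A3 T p) {u : ℕ → ℝ} (hu : inLM T M u) :
    ∃ R, 0 ≤ R ∧ ∀ x, inE T x → J T p g f u x ≤ 0 → ∀ k ∈ Finset.Icc 1 T, |x k| ≤ R := by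
  obtain ⟨α, hα, h⟩ := hA2
  have hB : ∀ k, ∃ C, k ∈ Finset.Icc 1 T → ∀ s, Fint f k s (u k) ≤ C := by
    intro k
    by_cases hk : k ∈ Finset.Icc 1 T
    · obtain ⟨C, hC⟩ := primitive_bddAbove (continuous_slice hA1 hu hk) hα
        fun y hy => h k hk y (u k) hy (hu k hk)
      exact ⟨C, fun _ => hC⟩
    · exact ⟨0, fun hk' => absurd hk' hk⟩
  choose B hB using hB
  have hm : 0 < mmin T p := hA3
  set m := mmin T p with hm_def
  have hTpos : (0 : ℝ) < T := by exact_mod_cast hT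
  -- With this weight in Young's inequality the linear term costs half of the quadratic part.
  set c : ℝ := m / (4 * (T * (T + 1))) with hc_def
  have hc : 0 < c := by positivity
  set D : ℝ := ∑ k ∈ Finset.Icc 1 T, B k + ∑ k ∈ Finset.Icc 1 T, g k ^ 2 / (4 * c) with hD
  refine ⟨√((T + 1) * (4 * D / m)), Real.sqrt_nonneg _, fun x hx hJ k hk => ?_⟩
  set S := ∑ j ∈ Finset.Icc 1 (T + 1), (x j - x (j - 1)) ^ 2 with hS
  have hP : m / 2 * S ≤ ∑ j ∈ Finset.Icc 1 (T + 1), p j / 2 * (x j - x (j - 1)) ^ 2 := by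
    rw [hS, Finset.mul_sum]
    refine Finset.sum_le_sum fun j hj => ?_
    have : m ≤ p j := Finset.inf'_le _ hj
    gcongr
  have hFs : ∑ j ∈ Finset.Icc 1 T, Fint f j (x j) (u j) ≤ ∑ j ∈ Finset.Icc 1 T, B j :=
    Finset.sum_le_sum fun j hj => hB j hj _
  have hG : -(∑ j ∈ Finset.Icc 1 T, c * x j ^ 2) - ∑ j ∈ Finset.Icc 1 T, g j ^ 2 / (4 * c)
      ≤ ∑ j ∈ Finset.Icc 1 T, g j * x j := by
    rw [← Finset.sum_neg_distrib, ← Finset.sum_sub_distrib]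
    refine Finset.sum_le_sum fun j _ => ?_
    have e : g j * x j - (-(c * x j ^ 2) - g j ^ 2 / (4 * c))
        = (2 * c * x j + g j) ^ 2 / (4 * c) := by
      field_simp
      ring
    have : 0 ≤ (2 * c * x j + g j) ^ 2 / (4 * c) := by positivity
    linarith
  have hX : ∑ j ∈ Finset.Icc 1 T, c * x j ^ 2 ≤ m / 4 * S := by
    calc ∑ j ∈ Finset.Icc 1 T, c * x j ^ 2 ≤ ∑ _j ∈ Finset.Icc 1 T, c * ((T + 1) * S) := by
          refine Finset.sum_le_sum fun j hj => ?_
          have := sq_le_sum_sq_diff hx.1 (Finset.mem_Icc.1 hj).2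
          gcongr
      _ = m / 4 * S := by
          rw [Finset.sum_const, Nat.card_Icc, nsmul_eq_mul, hc_def]
          push_cast [Nat.add_sub_cancel]
          field_simp
  have hSD : S ≤ 4 * D / m := by
    rw [le_div_iff₀ hm]
    unfold J at hJ
    linarith
  refine Real.abs_le_sqrt ((sq_le_sum_sq_diff hx.1 (Finset.mem_Icc.1 hk).2).trans ?_)
  gcongr

/-! ### Differentiation along a coordinate -/

/-- The partial derivative of `J` in the `k`-th coordinate. -/
lemma hasDerivAt_J_update {T : ℕ} {M : ℝ} {f : ℕ → ℝ → ℝ → ℝ} (p g : ℕ → ℝ) (hA1 : A1 T M f)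
    {u : ℕ → ℝ} (hu : inLM T M u) (x : ℕ → ℝ) {k : ℕ} (hk : k ∈ Finset.Icc 1 T) :
    HasDerivAt (fun t => J T p g f u (Function.update x k t))
      (p k * (x k - x (k - 1)) - p (k + 1) * (x (k + 1) - x k) - f k (x k) (u k) + g k)
      (x k) := by
  have hd : ∀ j, HasDerivAt (fun t => Function.update x k t j) (if j = k then 1 else 0) (x k) := by
    intro j
    by_cases hj : j = k
    · subst hj
      simpa using hasDerivAt_id' (x j)
    · simpa [hj] using hasDerivAt_const (x k) (x j)
  have hx : Function.update x k (x k) = x := Function.update_eq_self k x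
  have h1 : HasDerivAt
      (fun t => ∑ j ∈ Finset.Icc 1 (T + 1),
        p j / 2 * (Function.update x k t j - Function.update x k t (j - 1)) ^ 2)
      (∑ j ∈ Finset.Icc 1 (T + 1), p j * (x j - x (j - 1)) *
        ((if j = k then 1 else 0) - (if j - 1 = k then 1 else 0))) (x k) := by
    refine HasDerivAt.fun_sum fun j _ => ?_
    refine ((((hd j).fun_sub (hd (j - 1))).fun_pow 2).const_mul (p j / 2)).congr_deriv ?_
    simp only [hx]
    push_cast
    ring
  have h2 : HasDerivAt
      (fun t => ∑ j ∈ Finset.Icc 1 T, Fint f j (Function.update x k t j) (u j))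
      (∑ j ∈ Finset.Icc 1 T, f j (x j) (u j) * (if j = k then 1 else 0)) (x k) := by
    refine HasDerivAt.fun_sum fun j hj => ?_
    have hc := continuous_slice hA1 hu hj
    have hF : HasDerivAt (fun s => Fint f j s (u j)) (f j (x j) (u j))
        (Function.update x k (x k) j) := by
      rw [hx]
      exact intervalIntegral.integral_hasDerivAt_right (hc.intervalIntegrable _ _)
        (hc.stronglyMeasurableAtFilter _ _) hc.continuousAt
    exact hF.comp (x k) (hd j)
  have h3 : HasDerivAt
      (fun t => ∑ j ∈ Finset.Icc 1 T, g j * Function.update x k t j)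
      (∑ j ∈ Finset.Icc 1 T, g j * (if j = k then 1 else 0)) (x k) :=
    HasDerivAt.fun_sum fun j _ => (hd j).const_mul (g j)
  have hk' := Finset.mem_Icc.1 hk
  have hshift : ∀ j ∈ Finset.Icc 1 (T + 1), p j * (x j - x (j - 1)) *
        (((if j = k then 1 else 0) : ℝ) - (if j - 1 = k then 1 else 0))
      = (if j = k then p j * (x j - x (j - 1)) else 0)
        - (if j = k + 1 then p j * (x j - x (j - 1)) else 0) := by
    intro j hj
    have : j - 1 = k ↔ j = k + 1 := by
      have := (Finset.mem_Icc.1 hj).1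
      omega
    simp only [this]
    split_ifs <;> ring
  refine ((h1.fun_sub h2).fun_add h3).congr_deriv ?_
  rw [Finset.sum_congr rfl hshift, Finset.sum_sub_distrib]
  simp only [mul_ite, mul_one, mul_zero, Finset.sum_ite_eq']
  have m1 : k ∈ Finset.Icc 1 (T + 1) := Finset.mem_Icc.2 (by omega)
  have m2 : k + 1 ∈ Finset.Icc 1 (T + 1) := Finset.mem_Icc.2 (by omega)
  simp only [m1, m2, hk, if_true, Nat.add_sub_cancel]

/-! ### Existence of a minimizer and its Euler–Lagrange equation -/

/-- under A1–A3, for every `u ∈ L_M` the functional `J_u` attains its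
infimum over `E`, every minimizer solves `(P_u)`, and in particular `(P_u)` has at
least one solution. -/
theorem exists_minimizer_and_solution (T : ℕ) (hT : 1 ≤ T) (M : ℝ) (hM : 0 < M)
    (f : ℕ → ℝ → ℝ → ℝ) (p g : ℕ → ℝ)
    (hA1 : A1 T M f) (hA2 : A2 T M f) (hA3 : A3 T p) :
    ∀ u : ℕ → ℝ, inLM T M u →
      (∃ x : ℕ → ℝ, inE T x ∧ ∀ y : ℕ → ℝ, inE T y → J T p g f u x ≤ J T p g f u y) ∧
      (∀ x : ℕ → ℝ, inE T x →
        (∀ y : ℕ → ℝ, inE T y → J T p g f u x ≤ J T p g f u y) → SolvesP T p g f u x) ∧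
      (∃ x : ℕ → ℝ, SolvesP T p g f u x) := by
  intro u hu
  have hex : ∃ x : ℕ → ℝ, inE T x ∧ ∀ y : ℕ → ℝ, inE T y → J T p g f u x ≤ J T p g f u y := by
    obtain ⟨R, hR0, hR⟩ := sublevel_bounded (g := g) hT hA1 hA2 hA3 hu
    -- Pinning the irrelevant coordinates to `0` makes the box compact in the product topology.
    set K : Set (ℕ → ℝ) := Set.univ.pi fun k =>
      if k ∈ Finset.Icc 1 T then Set.Icc (-R) R else {0} with hK
    have hKc : IsCompact K := isCompact_univ_pi fun k => by
      split_ifs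
      · exact isCompact_Icc
      · exact isCompact_singleton
    have h0K : (0 : ℕ → ℝ) ∈ K := by
      intro k _
      dsimp only
      split_ifs
      · exact ⟨by simpa using hR0, hR0⟩
      · rfl
    obtain ⟨x, hxK, hx⟩ := hKc.exists_isMinOn ⟨0, h0K⟩ (continuous_J p g hA1 hu).continuousOn
    have hout : ∀ k, k ∉ Finset.Icc 1 T → x k = 0 := by
      intro k hk
      have := hxK k (Set.mem_univ k)
      simpa only [hk, if_false, Set.mem_singleton_iff] using this
    refine ⟨x, ⟨hout 0 (by simp), hout (T + 1) (by simp)⟩, fun y hy => ?_⟩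
    have hJ0 : J T p g f u 0 = 0 := by simp [J, Fint]
    rcases le_total (J T p g f u y) 0 with hle | hle
    · have hyR := hR y hy hle
      set z : ℕ → ℝ := fun k => if k ∈ Finset.Icc 1 T then y k else 0 with hz
      have hzK : z ∈ K := by
        intro k _
        by_cases hk : k ∈ Finset.Icc 1 T
        · simpa only [hz, hk, if_true, Set.mem_Icc] using abs_le.1 (hyR k hk)
        · simp only [hz, hk, if_false, Set.mem_singleton_iff]
      have hzy : J T p g f u z = J T p g f u y := by
        refine J_congr fun k hk => ?_
        by_cases hk' : k ∈ Finset.Icc 1 T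
        · simp only [hz, hk', if_true]
        · simp only [hz, hk', if_false]
          rw [Finset.mem_Icc] at hk'
          rcases (by omega : k = 0 ∨ k = T + 1) with rfl | rfl
          · exact hy.1.symm
          · exact hy.2.symm
      exact hzy ▸ hx hzK
    · have : J T p g f u x ≤ J T p g f u 0 := hx h0K
      linarith
  have hcrit : ∀ x : ℕ → ℝ, inE T x →
      (∀ y : ℕ → ℝ, inE T y → J T p g f u x ≤ J T p g f u y) → SolvesP T p g f u x := by
    refine fun x hxE hx => ⟨hxE, fun k hk => ?_⟩
    have hk' := Finset.mem_Icc.1 hk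
    have hmin : IsLocalMin (fun t => J T p g f u (Function.update x k t)) (x k) := by
      refine Filter.Eventually.of_forall fun t => ?_
      simp only [Function.update_eq_self]
      refine hx _ ⟨?_, ?_⟩
      · rw [Function.update_of_ne (by omega)]
        exact hxE.1
      · rw [Function.update_of_ne (by omega)]
        exact hxE.2
    have := hmin.hasDerivAt_eq_zero (hasDerivAt_J_update p g hA1 hu x hk)
    linarith
  obtain ⟨x, hxE, hx⟩ := hex
  exact ⟨⟨x, hxE, hx⟩, hcrit, x, hcrit x hxE hx⟩
end

section
/- Assume A1 and A2. Then there exists a constant C > 0 such that for all x ∈ E and all u ∈ L_M one has ∑_{k=1}^{T} F(k,x(k),u(k)) ≤ C; indeed one may take C = ∑_{k=1}^{T} max_{|u|≤M} ∫_{−α}^{α} |f(k,t,u)| dt, where α is the constant from A2. -/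
/-!
Beyond `[-α, α]` the sign condition `y * f(k, y, v) ≤ 0` makes the primitive `s ↦ F(k, s, v)`
nonincreasing as `s` moves away from `0`. So `F(k, s, v)` is at most its value at the truncation of `s`
to `[-α, α]`, which is at most `∫_{-α}^{α} |f(k, t, v)| dt` (`integral_le_of_sign`). This integral
is in turn at most the supremum over `|v| ≤ M`, because the family is bounded above, by compactness
of `[-α, α] × [-M, M]` (`bddAbove_integral_abs`). Summing over `k` gives the claim.
-/

open Finset Filter Topology

/-- A primitive vanishing at `0` of a continuous function with `y * h y ≤ 0` outside
`(-α, α)` is bounded above by the `L¹` norm of the function on `[-α, α]`. -/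
lemma integral_le_of_sign {h : ℝ → ℝ} (hh : Continuous h) {α : ℝ} (hα : 0 < α)
    (hs : ∀ y, α ≤ |y| → y * h y ≤ 0) (s : ℝ) :
    ∫ t in (0:ℝ)..s, h t ≤ ∫ t in (-α)..α, |h t| := by
  have hi : ∀ a b, IntervalIntegrable h MeasureTheory.volume a b :=
    fun a b => hh.intervalIntegrable a b
  have key : ∀ c, -α ≤ c → c ≤ α → ∫ t in (0:ℝ)..c, h t ≤ ∫ t in (-α)..α, |h t| := by
    intro c h1 h2
    calc ∫ t in (0:ℝ)..c, h t ≤ |∫ t in (0:ℝ)..c, h t| := le_abs_self _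
      _ ≤ |(∫ t in (0:ℝ)..c, |h t|)| := by
          simpa only [Real.norm_eq_abs] using
            intervalIntegral.norm_integral_le_abs_integral_norm (f := h) (a := 0) (b := c)
              (μ := MeasureTheory.volume)
      _ ≤ |(∫ t in (-α)..α, |h t|)| := by
          apply intervalIntegral.abs_integral_mono_interval
          · apply Set.uIoc_subset_uIoc_of_uIcc_subset_uIcc
            apply Set.uIcc_subset_uIcc <;> rw [Set.uIcc_of_le (by linarith)] <;>
              constructor <;> linarith
          · exact Filter.Eventually.of_forall fun t => abs_nonneg _
          · exact hh.abs.intervalIntegrable _ _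
      _ = ∫ t in (-α)..α, |h t| :=
          abs_of_nonneg (intervalIntegral.integral_nonneg (by linarith) fun t _ => abs_nonneg _)
  rcases le_total s α with h1 | h1
  · rcases le_total (-α) s with h2 | h2
    · exact key s h2 h1
    · rw [← intervalIntegral.integral_add_adjacent_intervals (hi 0 (-α)) (hi (-α) s),
        intervalIntegral.integral_symm s (-α)]
      have h3 : 0 ≤ ∫ t in s..(-α), h t := by
        refine intervalIntegral.integral_nonneg h2 fun t ht => ?_
        have := hs t (by rw [abs_of_neg (by linarith [ht.2])]; linarith [ht.2])
        exact nonneg_of_mul_nonpos_right this (by linarith [ht.2])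
      linarith [key (-α) le_rfl (by linarith)]
  · rw [← intervalIntegral.integral_add_adjacent_intervals (hi 0 α) (hi α s)]
    have h3 : 0 ≤ ∫ t in α..s, -h t := by
      refine intervalIntegral.integral_nonneg h1 fun t ht => neg_nonneg.mpr ?_
      have := hs t (ht.1.trans (le_abs_self t))
      exact nonpos_of_mul_nonpos_right this (by linarith [ht.1])
    rw [intervalIntegral.integral_neg] at h3
    linarith [key α (by linarith) le_rfl]

lemma bddAbove_integral_abs {φ : ℝ → ℝ → ℝ} {M α : ℝ} (hα : 0 < α)
    (hφ : ContinuousOn (fun q : ℝ × ℝ => φ q.1 q.2) (Set.univ ×ˢ Set.Icc (-M) M)) :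
    ∃ B, 0 ≤ B ∧ ∀ v ∈ Set.Icc (-M) M, ∫ t in (-α)..α, |φ t v| ≤ B := by
  obtain ⟨B, hB⟩ := ((isCompact_Icc (a := -α) (b := α)).prod
    (isCompact_Icc (a := -M) (b := M))).exists_bound_of_continuousOn
      (hφ.mono (Set.prod_mono_left (Set.subset_univ _)))
  refine ⟨max B 0 * |α - -α|, by positivity, fun v hv => ?_⟩
  refine (le_abs_self _).trans ?_
  rw [← Real.norm_eq_abs]
  refine intervalIntegral.norm_integral_le_of_norm_le_const fun t ht => ?_
  rw [Set.uIoc_of_le (by linarith)] at ht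
  have := hB (t, v) ⟨⟨ht.1.le, ht.2⟩, hv⟩
  simpa using Or.inl this

/-- under A1 and A2 the sums `∑_{k=1}^{T} F(k,x(k),u(k))` are bounded above,
uniformly in `x ∈ E` and `u ∈ L_M`; one may take
`C = ∑_{k=1}^{T} sup_{|u|≤M} ∫_{−α}^{α} |f(k,t,u)| dt`. -/
theorem F_sum_bounded (T : ℕ) (hT : 1 ≤ T) (M : ℝ) (hM : 0 < M)
    (f : ℕ → ℝ → ℝ → ℝ) (hA1 : A1 T M f)
    (α : ℝ) (hα : 0 < α)
    (hA2 : ∀ k ∈ Finset.Icc 1 T, ∀ y v : ℝ, α ≤ |y| → |v| ≤ M → y * f k y v ≤ 0) :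
    (∀ x : ℕ → ℝ, inE T x → ∀ u : ℕ → ℝ, inLM T M u →
      ∑ k ∈ Finset.Icc 1 T, Fint f k (x k) (u k) ≤
        ∑ k ∈ Finset.Icc 1 T, ⨆ v ∈ Set.Icc (-M) M, ∫ t in (-α)..α, |f k t v|) ∧
    ∃ C > (0:ℝ), ∀ x : ℕ → ℝ, inE T x → ∀ u : ℕ → ℝ, inLM T M u →
      ∑ k ∈ Finset.Icc 1 T, Fint f k (x k) (u k) ≤ C := by
  have main : ∀ x : ℕ → ℝ, inE T x → ∀ u : ℕ → ℝ, inLM T M u →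
      ∑ k ∈ Finset.Icc 1 T, Fint f k (x k) (u k) ≤
        ∑ k ∈ Finset.Icc 1 T, ⨆ v ∈ Set.Icc (-M) M, ∫ t in (-α)..α, |f k t v| := by
    intro x _ u hu
    refine Finset.sum_le_sum fun k hk => ?_
    have huk : u k ∈ Set.Icc (-M) M := abs_le.mp (hu k hk)
    have hc : Continuous fun t => f k t (u k) :=
      (hA1 k hk).comp_continuous (f := fun t : ℝ => (t, u k)) (by fun_prop)
        fun t => ⟨Set.mem_univ _, huk⟩
    refine (integral_le_of_sign hc hα
      (fun y hy => hA2 k hk y (u k) hy (hu k hk)) (x k)).trans ?_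
    obtain ⟨B, hB0, hB⟩ := bddAbove_integral_abs hα (hA1 k hk)
    -- For `v` outside `[-M, M]` the inner supremum is over the empty set, hence equals `0 ≤ B`.
    have hbdd : BddAbove (Set.range fun v =>
        ⨆ (_ : v ∈ Set.Icc (-M) M), ∫ t in (-α)..α, |f k t v|) :=
      ⟨B, by rintro _ ⟨v, rfl⟩; exact Real.iSup_le (fun hv => hB v hv) hB0⟩
    refine le_trans ?_ (le_ciSup hbdd (u k))
    simp [huk.1, huk.2]
  exact ⟨main, _, lt_max_of_lt_right one_pos,
    fun x hx u hu => (main x hx u hu).trans (le_max_left _ _)⟩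
end

section
/- Assume A1, A2 and A3. Then there exist constants γ > 0 and C > 0 such that for every u ∈ L_M and every x ∈ E one has the coercivity estimate J_u(x) ≥ (m/2)‖x‖² − (1/γ)(∑_{k=1}^{T} g(k)²)^{1/2} ‖x‖ − C, where m = min_{1≤k≤T+1} p(k) and γ is a constant with γ|y| ≤ ‖y‖ for all y ∈ E. In particular, for each u ∈ L_M the functional J_u is coercive on E (J_u(x) → ∞ as ‖x‖ → ∞). -/
/-!
The kinetic term dominates `m / 2 * ‖x‖²` term by term, and by Cauchy–Schwarz together with the
discrete Poincaré inequality `|x| ≤ T ‖x‖` (`euclE_le_mul_normE`, so `γ = 1 / T`) the linear term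
is at least `-(1 / γ) |g| ‖x‖`. The nonlinear term is handled by `exists_Fint_le`: the potential
`F(k, ·, v)` is bounded above uniformly in `v ∈ [-M, M]`, because it is bounded on the compact
interval `[-α, α]` and the sign condition makes it nonincreasing in the direction away from the
origin outside of it. Coercivity follows since the resulting lower bound is a quadratic polynomial
in `‖x‖` with positive leading coefficient.
-/


open Finset Filter Topology

/-- Discrete Poincaré inequality: only the right boundary condition is needed, since `y k` is then
the telescoping sum of the increments to the right of `k`. -/
lemma euclE_le_mul_normE (T : ℕ) (y : ℕ → ℝ) (hy : y (T + 1) = 0) :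
    euclE T y ≤ T * normE T y := by
  have hS : 0 ≤ ∑ j ∈ Finset.Icc 1 T, (y (j + 1) - y j) ^ 2 :=
    Finset.sum_nonneg fun _ _ => sq_nonneg _
  have hk : ∀ k ∈ Finset.Icc 1 T,
      (y k) ^ 2 ≤ T * ∑ j ∈ Finset.Icc 1 T, (y (j + 1) - y j) ^ 2 := by
    intro k hk
    rw [Finset.mem_Icc] at hk
    have htel : ∑ j ∈ Finset.Ico k (T + 1), (y (j + 1) - y j) = - y k := by
      rw [Finset.sum_Ico_sub y (by omega), hy, zero_sub]
    have hsub : Finset.Ico k (T + 1) ⊆ Finset.Icc 1 T := by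
      intro j hj
      simp only [Finset.mem_Ico, Finset.mem_Icc] at hj ⊢
      omega
    have hcard : ((Finset.Ico k (T + 1)).card : ℝ) ≤ T := by
      rw [Nat.card_Ico]
      exact_mod_cast (by omega : T + 1 - k ≤ T)
    calc (y k) ^ 2 = (∑ j ∈ Finset.Ico k (T + 1), (y (j + 1) - y j)) ^ 2 := by
          rw [htel, neg_sq]
      _ ≤ (Finset.Ico k (T + 1)).card * ∑ j ∈ Finset.Ico k (T + 1), (y (j + 1) - y j) ^ 2 :=
          sq_sum_le_card_mul_sum_sq
      _ ≤ T * ∑ j ∈ Finset.Icc 1 T, (y (j + 1) - y j) ^ 2 := by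
          refine mul_le_mul hcard ?_ (Finset.sum_nonneg fun _ _ => sq_nonneg _) (by positivity)
          exact Finset.sum_le_sum_of_subset_of_nonneg hsub fun _ _ _ => sq_nonneg _
  refine Real.sqrt_le_iff.mpr ⟨mul_nonneg (Nat.cast_nonneg T) (Real.sqrt_nonneg _), ?_⟩
  calc ∑ k ∈ Finset.Icc 1 T, (y k) ^ 2
      ≤ ∑ _k ∈ Finset.Icc 1 T, T * ∑ j ∈ Finset.Icc 1 T, (y (j + 1) - y j) ^ 2 :=
        Finset.sum_le_sum hk
    _ = (T * normE T y) ^ 2 := by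
        rw [Finset.sum_const, Nat.card_Icc, mul_pow, normE, Real.sq_sqrt hS, nsmul_eq_mul,
          Nat.add_sub_cancel]
        ring

/-- The potential `F(k, s, v)` is bounded above uniformly in `s ∈ ℝ` and `|v| ≤ M`. -/
lemma exists_Fint_le (M : ℝ) (f : ℕ → ℝ → ℝ → ℝ) (k : ℕ)
    (hf : ContinuousOn (fun q : ℝ × ℝ => f k q.1 q.2) (Set.univ ×ˢ Set.Icc (-M) M))
    {α : ℝ} (hα : 0 < α) (hsign : ∀ y v : ℝ, α ≤ |y| → |v| ≤ M → y * f k y v ≤ 0) :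
    ∃ B : ℝ, 0 ≤ B ∧ ∀ s v : ℝ, |v| ≤ M → Fint f k s v ≤ B := by
  obtain ⟨D, hD⟩ := (isCompact_Icc.prod isCompact_Icc).exists_bound_of_continuousOn
    (hf.mono (Set.prod_mono (Set.subset_univ (Set.Icc (-α) α)) subset_rfl))
  have hbd : ∀ t v : ℝ, |t| ≤ α → |v| ≤ M → ‖f k t v‖ ≤ max D 0 := fun t v ht hv =>
    (hD (t, v) ⟨abs_le.mp ht, abs_le.mp hv⟩).trans (le_max_left _ _)
  refine ⟨max D 0 * α, by positivity, fun s v hv => ?_⟩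
  have hcont : Continuous fun t => f k t v :=
    hf.comp_continuous (f := fun t : ℝ => (t, v)) (by fun_prop)
      fun t => ⟨Set.mem_univ _, abs_le.mp hv⟩
  have hint : ∀ a b : ℝ, IntervalIntegrable (fun t => f k t v) MeasureTheory.volume a b :=
    fun a b => hcont.intervalIntegrable a b
  have hsmall : ∀ r : ℝ, |r| ≤ α → ∫ t in (0:ℝ)..r, f k t v ≤ max D 0 * α := by
    intro r hr
    have h := intervalIntegral.norm_integral_le_of_norm_le_const (a := 0) (b := r)
      (f := fun t => f k t v) (C := max D 0) (fun t ht => hbd t v ?_ hv)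
    · rw [sub_zero] at h
      exact ((le_abs_self _).trans h).trans (mul_le_mul_of_nonneg_left hr (le_max_right _ _))
    · have h2 : |t - 0| ≤ |r - 0| :=
        Set.abs_sub_left_of_mem_uIcc (Set.uIoc_subset_uIcc ht)
      rw [sub_zero, sub_zero] at h2
      exact h2.trans hr
  unfold Fint
  rcases le_or_gt |s| α with hs | hs
  · exact hsmall s hs
  rcases lt_abs.mp hs with hs | hs
  · rw [← intervalIntegral.integral_add_adjacent_intervals (hint 0 α) (hint α s)]
    have h1 := hsmall α (abs_of_pos hα).le
    have h2 : ∫ t in α..s, f k t v ≤ ∫ _t in α..s, (0:ℝ) := by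
      refine intervalIntegral.integral_mono_on hs.le (hint _ _) (by simp) fun t ht => ?_
      have := hsign t v (ht.1.trans (le_abs_self t)) hv
      exact nonpos_of_mul_nonpos_right this (hα.trans_le ht.1)
    rw [intervalIntegral.integral_zero] at h2
    linarith
  · rw [← intervalIntegral.integral_add_adjacent_intervals (hint 0 (-α)) (hint (-α) s),
      intervalIntegral.integral_symm s (-α)]
    have h1 := hsmall (-α) (by rw [abs_neg, abs_of_pos hα])
    have h2 : 0 ≤ ∫ t in s..(-α), f k t v := by
      refine intervalIntegral.integral_nonneg (by linarith) fun t ht => ?_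
      have := hsign t v (le_abs.mpr (Or.inr (by linarith [ht.2]))) hv
      nlinarith [ht.2]
    linarith

/-- The summand `k = 1` of the kinetic term does not occur in `‖x‖²`; it is nonnegative and is
discarded. -/
lemma mmin_mul_normE_sq_le (T : ℕ) (p x : ℕ → ℝ) (hp : 0 < mmin T p) :
    mmin T p / 2 * (normE T x) ^ 2
      ≤ ∑ k ∈ Finset.Icc 1 (T + 1), p k / 2 * (x k - x (k - 1)) ^ 2 := by
  have hm : ∀ k ∈ Finset.Icc 1 (T + 1), mmin T p ≤ p k := fun k hk => Finset.inf'_le _ hk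
  have hshift : ∑ k ∈ Finset.Icc 1 T, p (k + 1) / 2 * (x (k + 1) - x k) ^ 2
      = ∑ k ∈ Finset.Icc 2 (T + 1), p k / 2 * (x k - x (k - 1)) ^ 2 := by
    rw [← Finset.map_add_right_Icc 1 T 1, Finset.sum_map]
    simp
  rw [normE, Real.sq_sqrt (Finset.sum_nonneg fun _ _ => sq_nonneg _), Finset.mul_sum]
  calc ∑ k ∈ Finset.Icc 1 T, mmin T p / 2 * (x (k + 1) - x k) ^ 2
      ≤ ∑ k ∈ Finset.Icc 1 T, p (k + 1) / 2 * (x (k + 1) - x k) ^ 2 := by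
        refine Finset.sum_le_sum fun k hk => ?_
        have := hm (k + 1) (by rw [Finset.mem_Icc] at hk ⊢; omega)
        gcongr
    _ ≤ _ := by
        rw [hshift]
        refine Finset.sum_le_sum_of_subset_of_nonneg
          (Finset.Icc_subset_Icc_left (by norm_num)) fun k hk _ => ?_
        have := hp.trans_le (hm k hk)
        positivity

/-- under A1–A3 the coercivity estimate
`J_u(x) ≥ (m/2)‖x‖² − (1/γ)(∑ g(k)²)^{1/2}‖x‖ − C` holds, hence each `J_u` is
coercive on `E`. -/
theorem J_coercive_estimate (T : ℕ) (hT : 1 ≤ T) (M : ℝ) (hM : 0 < M)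
    (f : ℕ → ℝ → ℝ → ℝ) (p g : ℕ → ℝ)
    (hA1 : A1 T M f) (hA2 : A2 T M f) (hA3 : A3 T p) :
    ∃ γ > (0:ℝ), ∃ C > (0:ℝ),
      (∀ y : ℕ → ℝ, inE T y → γ * euclE T y ≤ normE T y) ∧
      (∀ u : ℕ → ℝ, inLM T M u → ∀ x : ℕ → ℝ, inE T x →
        mmin T p / 2 * (normE T x) ^ 2
            - 1 / γ * Real.sqrt (∑ k ∈ Finset.Icc 1 T, (g k) ^ 2) * normE T x - C
          ≤ J T p g f u x) ∧
      (∀ u : ℕ → ℝ, inLM T M u → ∀ K : ℝ, ∃ R : ℝ,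
        ∀ x : ℕ → ℝ, inE T x → R ≤ normE T x → K ≤ J T p g f u x) := by
  obtain ⟨α, hα, hsign⟩ := hA2
  have hm : 0 < mmin T p := hA3
  have hT0 : (0:ℝ) < T := by exact_mod_cast hT
  have hB : ∀ k, ∃ B : ℝ, 0 ≤ B ∧
      (k ∈ Finset.Icc 1 T → ∀ s v : ℝ, |v| ≤ M → Fint f k s v ≤ B) := by
    intro k
    by_cases hk : k ∈ Finset.Icc 1 T
    · obtain ⟨B, hB0, hB⟩ := exists_Fint_le M f k (hA1 k hk) hα (hsign k hk)
      exact ⟨B, hB0, fun _ => hB⟩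
    · exact ⟨0, le_rfl, fun h => absurd h hk⟩
  choose B hB0 hB using hB
  set G := Real.sqrt (∑ k ∈ Finset.Icc 1 T, (g k) ^ 2) with hG
  have hG0 : 0 ≤ G := Real.sqrt_nonneg _
  set C := ∑ k ∈ Finset.Icc 1 T, B k + 1 with hC
  have hC0 : 0 < C := by
    have := Finset.sum_nonneg fun k (_ : k ∈ Finset.Icc 1 T) => hB0 k
    linarith
  have hest : ∀ u : ℕ → ℝ, inLM T M u → ∀ x : ℕ → ℝ, inE T x →
      mmin T p / 2 * (normE T x) ^ 2 - T * G * normE T x - C ≤ J T p g f u x := by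
    intro u hu x hx
    have hkin := mmin_mul_normE_sq_le T p x hm
    have hpot : ∑ k ∈ Finset.Icc 1 T, Fint f k (x k) (u k) ≤ ∑ k ∈ Finset.Icc 1 T, B k :=
      Finset.sum_le_sum fun k hk => hB k hk _ _ (hu k hk)
    have hlin : -(T * G * normE T x) ≤ ∑ k ∈ Finset.Icc 1 T, g k * x k := by
      have hcs := Real.sum_mul_le_sqrt_mul_sqrt (Finset.Icc 1 T) (fun k => -g k) x
      simp only [neg_mul, Finset.sum_neg_distrib, neg_sq] at hcs
      have := mul_le_mul_of_nonneg_left (euclE_le_mul_normE T x hx.2) hG0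
      rw [euclE] at this
      linarith
    unfold J
    linarith
  refine ⟨1 / T, by positivity, C, hC0, fun y hy => ?_, fun u hu x hx => ?_, fun u hu K => ?_⟩
  · rw [one_div, inv_mul_le_iff₀ hT0]
    exact euclE_le_mul_normE T y hy.2
  · rw [one_div_one_div]
    exact hest u hu x hx
  · -- For `r ≥ R` one has `m r / 2 - T G ≥ C + |K|`; multiplying by `r ≥ 1` gives the bound.
    refine ⟨max 1 (2 * (T * G + C + |K|) / mmin T p), fun x hx hr => ?_⟩
    have h1 : 1 ≤ normE T x := (le_max_left _ _).trans hr
    have h2 := (le_max_right _ _).trans hr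
    rw [div_le_iff₀ hm] at h2
    have h3 := hest u hu x hx
    have h4 : 0 ≤ normE T x * (mmin T p / 2 * normE T x - T * G - (C + |K|)) :=
      mul_nonneg (by linarith) (by linarith)
    have h5 : 0 ≤ (normE T x - 1) * (C + |K|) := mul_nonneg (by linarith) (by positivity)
    have h6 := le_abs_self K
    nlinarith
end

section
/- Assume A1, A2 and A3. Then J_u(0) = 0 for every u ∈ L_M, and there exists a constant R > 0, independent of u, such that for every u ∈ L_M every x ∈ E with J_u(x) ≤ J_u(0) = 0 satisfies ‖x‖ ≤ R. In particular, every minimizer of J_u over E satisfies ‖x‖ ≤ R, so the family of sets of minimizers {V_u : u ∈ L_M} is uniformly bounded in E. -/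
/-!
The functional is coercive uniformly in `u`. By the sign condition A2, `t ↦ F(k,t,v)` is
nonincreasing on `[α,∞)` and nondecreasing on `(-∞,-α]`, so it is bounded above by its supremum over
`[-α,α]`, which compactness of `[-α,α] × [-M,M]` bounds independently of `v` (`Fint_bdd_above`). Let
`d` be the Euclidean norm of all `T + 1` increments of `x`. Telescoping from `x 0 = 0` gives
`|x k| ≤ (T + 1) d` (`abs_le_of_increments`), hence
`J_u(x) ≥ (m / 2) d² - C - K d` with `C`, `K` independent of `u`. Thus `J_u(x) ≤ 0` forces
`d ≤ 1 + 2 (C + K) / m`, and `‖x‖ ≤ d`. A minimizer `x` satisfies `J_u(x) ≤ J_u(0) = 0`.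
-/

open Finset Filter Topology

/-- The sign condition makes the primitive `F(k,·,v)` bounded above, uniformly in `|v| ≤ M`. -/
lemma Fint_bdd_above {T : ℕ} {M : ℝ} {f : ℕ → ℝ → ℝ → ℝ}
    (hA1 : A1 T M f) (hA2 : A2 T M f) {k : ℕ} (hk : k ∈ Finset.Icc 1 T) :
    ∃ C : ℝ, 0 ≤ C ∧ ∀ s v : ℝ, |v| ≤ M → Fint f k s v ≤ C := by
  obtain ⟨α, hα, hsign⟩ := hA2
  have hcomp : IsCompact (Set.Icc (-α) α ×ˢ Set.Icc (-M) M) := isCompact_Icc.prod isCompact_Icc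
  obtain ⟨B, hB⟩ := hcomp.exists_bound_of_continuousOn
    ((hA1 k hk).mono (Set.prod_mono (Set.subset_univ _) subset_rfl))
  have hB' : ∀ t v : ℝ, |t| ≤ α → |v| ≤ M → |f k t v| ≤ |B| := fun t v ht hv =>
    (hB (t, v) ⟨abs_le.mp ht, abs_le.mp hv⟩).trans (le_abs_self B)
  refine ⟨|B| * α, by positivity, fun s v hv => ?_⟩
  have hcont : Continuous (fun t => f k t v) := by
    have h := (hA1 k hk).comp_continuous (f := fun t : ℝ => (t, v)) (by fun_prop)
      (fun t => ⟨Set.mem_univ _, abs_le.mp hv⟩)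
    exact h
  have hint : ∀ a b : ℝ, IntervalIntegrable (fun t => f k t v) MeasureTheory.volume a b :=
    fun a b => hcont.intervalIntegrable a b
  have hmid : ∀ r : ℝ, |r| ≤ α → Fint f k r v ≤ |B| * α := by
    intro r hr
    have h1 : ‖∫ t in (0:ℝ)..r, f k t v‖ ≤ |B| * |r - 0| := by
      apply intervalIntegral.norm_integral_le_of_norm_le_const
      intro t ht
      refine hB' t v ?_ hv
      have h2 := Set.abs_sub_left_of_mem_uIcc (Set.uIoc_subset_uIcc ht)
      simp only [sub_zero] at h2
      exact h2.trans hr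
    rw [sub_zero] at h1
    exact (le_abs_self _).trans (h1.trans (by gcongr))
  have hsplit : ∀ r : ℝ, Fint f k s v = Fint f k r v + ∫ t in r..s, f k t v := fun r =>
    (intervalIntegral.integral_add_adjacent_intervals (hint 0 r) (hint r s)).symm
  rcases le_total |s| α with hs | hs
  · exact hmid s hs
  rcases le_abs'.mp hs with hs | hs
  · have h1 := hmid (-α) (by rw [abs_neg, abs_of_pos hα])
    have h2 : 0 ≤ ∫ t in s..(-α), f k t v := by
      apply intervalIntegral.integral_nonneg hs
      intro t ht
      have h3 := hsign k hk t v (by rw [abs_of_nonpos (by linarith [ht.2])]; linarith [ht.2]) hv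
      have h4 : t < 0 := by linarith [ht.2]
      nlinarith
    rw [hsplit (-α), intervalIntegral.integral_symm]
    linarith
  · have h1 := hmid α (by rw [abs_of_pos hα])
    have h2 : 0 ≤ ∫ t in α..s, -f k t v := by
      apply intervalIntegral.integral_nonneg hs
      intro t ht
      have h3 := hsign k hk t v (ht.1.trans (le_abs_self t)) hv
      have h4 : 0 < t := by linarith [ht.1]
      nlinarith
    rw [intervalIntegral.integral_neg] at h2
    rw [hsplit α]
    linarith

lemma abs_le_of_increments {T : ℕ} {x : ℕ → ℝ} (hx : x 0 = 0) {k : ℕ} (hk : k ≤ T + 1) :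
    |x k| ≤ k * Real.sqrt (∑ j ∈ Finset.Icc 1 (T + 1), (x j - x (j - 1)) ^ 2) := by
  induction k with
  | zero => simp [hx]
  | succ n ih =>
    have h1 : |x (n + 1) - x n| ≤ Real.sqrt (∑ j ∈ Finset.Icc 1 (T + 1), (x j - x (j - 1)) ^ 2) := by
      apply Real.abs_le_sqrt
      have := Finset.single_le_sum (f := fun j => (x j - x (j - 1)) ^ 2)
        (fun j _ => sq_nonneg _) (Finset.mem_Icc.mpr ⟨Nat.le_add_left 1 n, hk⟩)
      simpa using this
    have h2 := ih (by omega)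
    have h3 := abs_add_le (x (n + 1) - x n) (x n)
    rw [sub_add_cancel] at h3
    push_cast
    linarith

/-- `‖x‖` omits the first increment `x 1 - x 0`. -/
lemma normE_le (T : ℕ) (x : ℕ → ℝ) :
    normE T x ≤ Real.sqrt (∑ j ∈ Finset.Icc 1 (T + 1), (x j - x (j - 1)) ^ 2) := by
  apply Real.sqrt_le_sqrt
  have h : ∑ k ∈ Finset.Icc 1 T, (x (k + 1) - x k) ^ 2
      = ∑ j ∈ Finset.Icc 2 (T + 1), (x j - x (j - 1)) ^ 2 := by
    rw [← Finset.map_add_right_Icc 1 T 1, Finset.sum_map]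
    simp
  rw [h]
  exact Finset.sum_le_sum_of_subset_of_nonneg (Finset.Icc_subset_Icc (by norm_num) le_rfl)
    (fun _ _ _ => sq_nonneg _)

lemma J_zero (T : ℕ) (p g : ℕ → ℝ) (f : ℕ → ℝ → ℝ → ℝ) (u : ℕ → ℝ) :
    J T p g f u (fun _ => 0) = 0 := by
  simp [J, Fint]

/-- `J_u(0) = 0` for every `u ∈ L_M`, and there is `R > 0`, independent of
`u`, bounding every `x ∈ E` with `J_u(x) ≤ 0`; in particular all minimizers of `J_u`
are uniformly bounded. -/
theorem sublevel_uniformly_bounded (T : ℕ) (hT : 1 ≤ T) (M : ℝ) (hM : 0 < M)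
    (f : ℕ → ℝ → ℝ → ℝ) (p g : ℕ → ℝ)
    (hA1 : A1 T M f) (hA2 : A2 T M f) (hA3 : A3 T p) :
    (∀ u : ℕ → ℝ, inLM T M u → J T p g f u (fun _ => 0) = 0) ∧
    ∃ R > (0:ℝ),
      (∀ u : ℕ → ℝ, inLM T M u → ∀ x : ℕ → ℝ, inE T x →
        J T p g f u x ≤ 0 → normE T x ≤ R) ∧
      (∀ u : ℕ → ℝ, inLM T M u → ∀ x : ℕ → ℝ, inE T x →
        (∀ y : ℕ → ℝ, inE T y → J T p g f u x ≤ J T p g f u y) → normE T x ≤ R) := by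
  refine ⟨fun u _ => J_zero T p g f u, ?_⟩
  have hF : ∀ k, ∃ C : ℝ, 0 ≤ C ∧ (k ∈ Finset.Icc 1 T → ∀ s v : ℝ, |v| ≤ M → Fint f k s v ≤ C) := by
    intro k
    by_cases hk : k ∈ Finset.Icc 1 T
    · obtain ⟨C, hC, h⟩ := Fint_bdd_above hA1 hA2 hk
      exact ⟨C, hC, fun _ => h⟩
    · exact ⟨0, le_rfl, fun h => absurd h hk⟩
  choose c hc0 hc using hF
  set m := mmin T p with hm
  have hmpos : 0 < m := hA3
  set C := ∑ k ∈ Finset.Icc 1 T, c k with hC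
  set K := ∑ k ∈ Finset.Icc 1 T, |g k| * (T + 1) with hK
  have hC0 : 0 ≤ C := Finset.sum_nonneg fun k _ => hc0 k
  have hK0 : 0 ≤ K := Finset.sum_nonneg fun k _ => by positivity
  have main : ∀ u : ℕ → ℝ, inLM T M u → ∀ x : ℕ → ℝ, inE T x →
      J T p g f u x ≤ 0 → normE T x ≤ 1 + 2 * (C + K) / m := by
    intro u hu x hx hJ
    refine (normE_le T x).trans ?_
    set S := ∑ j ∈ Finset.Icc 1 (T + 1), (x j - x (j - 1)) ^ 2 with hS
    have hS0 : 0 ≤ S := Finset.sum_nonneg fun _ _ => sq_nonneg _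
    set d := Real.sqrt S with hd
    have hd0 : 0 ≤ d := Real.sqrt_nonneg _
    have hdd : d ^ 2 = S := Real.sq_sqrt hS0
    have e1 : m / 2 * S ≤ ∑ k ∈ Finset.Icc 1 (T + 1), p k / 2 * (x k - x (k - 1)) ^ 2 := by
      rw [hS, Finset.mul_sum]
      refine Finset.sum_le_sum fun k hk => ?_
      have : m ≤ p k := Finset.inf'_le p hk
      gcongr
    have e2 : ∑ k ∈ Finset.Icc 1 T, Fint f k (x k) (u k) ≤ C :=
      Finset.sum_le_sum fun k hk => hc k hk _ _ (hu k hk)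
    have e3 : -(K * d) ≤ ∑ k ∈ Finset.Icc 1 T, g k * x k := by
      rw [hK, Finset.sum_mul, ← Finset.sum_neg_distrib]
      refine Finset.sum_le_sum fun k hk => ?_
      have hkT : k ≤ T + 1 := (Finset.mem_Icc.mp hk).2.trans (Nat.le_succ T)
      have h1 : |x k| ≤ (T + 1) * d := by
        refine (abs_le_of_increments hx.1 hkT).trans ?_
        have : (k : ℝ) ≤ T + 1 := by exact_mod_cast hkT
        gcongr
      have h2 : |g k * x k| ≤ |g k| * (T + 1) * d := by
        rw [abs_mul, mul_assoc]
        gcongr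
      linarith [neg_abs_le (g k * x k)]
    have e4 : m / 2 * d ^ 2 ≤ C + K * d := by
      rw [hdd]
      unfold J at hJ
      linarith
    by_contra! hlt
    have hq : 0 ≤ 2 * (C + K) / m := by positivity
    have hd1 : 1 < d := by linarith
    have h5 : 2 * (C + K) < d * m := (div_lt_iff₀ hmpos).mp (by linarith)
    -- multiplying by `d > 1` gives `(m / 2) d² > (C + K) d ≥ C + K d`
    nlinarith [mul_lt_mul_of_pos_right h5 (by linarith : 0 < d),
      mul_nonneg hC0 (by linarith : 0 ≤ d - 1)]
  refine ⟨1 + 2 * (C + K) / m, by positivity, main, fun u hu x hx hmin => main u hu x hx ?_⟩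
  rw [← J_zero T p g f u]
  exact hmin _ ⟨rfl, rfl⟩
end

section
/- (Discrete strong comparison principle.) Let T ≥ 1, let p : {1,...,T+1} → ℝ satisfy min_{1≤k≤T+1} p(k) > 0, and let x : {0,1,...,T+1} → ℝ satisfy x(0) = x(T+1) = 0 and p(k+1)(x(k+1) − x(k)) − p(k)(x(k) − x(k−1)) ≤ 0 for all k = 1,...,T. Then either x(k) > 0 for all k ∈ {1,...,T}, or x(k) = 0 for all k ∈ {1,...,T}. -/
/-!
The flux `d k = p (k + 1) * (x (k + 1) - x k)` is nonincreasing on `{0,…,T}`, and its sign is that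
of the increment of `x` because `p > 0`. Hence `x` is nondecreasing up to `i + 1` when `d i ≥ 0`
and nonincreasing from `i` on when `d i ≤ 0`. Whichever sign `d k` has, comparing `x k` with the
corresponding zero boundary value gives `x k ≥ 0`. If `x` vanishes at an interior point `m`, then
`m` is a minimum, so `d m ≥ 0 ≥ d (m - 1)`; as the flux is nonincreasing, `d m = 0`. Thus `x` is
nondecreasing before `m` and nonincreasing after it, so `x ≤ x m = 0` everywhere.
-/

open Finset

/-- discrete strong comparison principle: if `p > 0` on `{1,…,T+1}`,
`x(0) = x(T+1) = 0` and `Δ(p(k)Δx(k−1)) ≤ 0` for `k = 1,…,T`, then either `x > 0` on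
`{1,…,T}` or `x ≡ 0` on `{1,…,T}`. -/
theorem discrete_strong_comparison (T : ℕ) (hT : 1 ≤ T) (p : ℕ → ℝ)
    (hp : ∀ k ∈ Finset.Icc 1 (T + 1), 0 < p k)
    (x : ℕ → ℝ) (hx0 : x 0 = 0) (hxT : x (T + 1) = 0)
    (hineq : ∀ k ∈ Finset.Icc 1 T,
      p (k + 1) * (x (k + 1) - x k) - p k * (x k - x (k - 1)) ≤ 0) :
    (∀ k ∈ Finset.Icc 1 T, 0 < x k) ∨ (∀ k ∈ Finset.Icc 1 T, x k = 0) := by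
  have hd : ∀ i j, i ≤ j → j ≤ T →
      p (j + 1) * (x (j + 1) - x j) ≤ p (i + 1) * (x (i + 1) - x i) := by
    intro i j hij
    induction j, hij using Nat.le_induction with
    | base => intro _; exact le_rfl
    | succ j _ ih =>
      intro hj
      have h := hineq (j + 1) (Finset.mem_Icc.2 ⟨by omega, hj⟩)
      rw [Nat.add_sub_cancel] at h
      linarith [ih (by omega)]
  have hpos : ∀ k, k ≤ T → 0 < p (k + 1) := fun k hk =>
    hp (k + 1) (Finset.mem_Icc.2 ⟨by omega, by omega⟩)
  have up : ∀ i, i ≤ T → 0 ≤ p (i + 1) * (x (i + 1) - x i) →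
      ∀ a b, a ≤ b → b ≤ i + 1 → x a ≤ x b := by
    intro i hi h a b hab
    induction b, hab using Nat.le_induction with
    | base => intro _; exact le_rfl
    | succ b _ ih =>
      intro hb
      have h1 := nonneg_of_mul_nonneg_right (h.trans (hd b i (by omega) hi)) (hpos b (by omega))
      linarith [ih (by omega)]
  have down : ∀ i, p (i + 1) * (x (i + 1) - x i) ≤ 0 →
      ∀ a b, i ≤ a → a ≤ b → b ≤ T + 1 → x b ≤ x a := by
    intro i h a b hia hab
    induction b, hab using Nat.le_induction with
    | base => intro _; exact le_rfl
    | succ b _ ih =>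
      intro hb
      have h1 := nonpos_of_mul_nonpos_right ((hd i b (by omega) (by omega)).trans h)
        (hpos b (by omega))
      linarith [ih (by omega)]
  have hnn : ∀ k, k ≤ T + 1 → 0 ≤ x k := by
    intro k hk
    rcases Nat.lt_or_ge T k with hk' | hk'
    · obtain rfl : k = T + 1 := by omega
      exact hxT.ge
    rcases le_total 0 (p (k + 1) * (x (k + 1) - x k)) with h | h
    · exact hx0.ge.trans (up k hk' h 0 k (by omega) (by omega))
    · exact hxT.ge.trans (down k h k (T + 1) le_rfl hk le_rfl)
  by_cases hall : ∀ k ∈ Finset.Icc 1 T, 0 < x k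
  · exact Or.inl hall
  right
  push Not at hall
  obtain ⟨m, hm, hxm⟩ := hall
  have hm' := Finset.mem_Icc.1 hm
  have hxm0 : x m = 0 := le_antisymm hxm (hnn m (by omega))
  have hge : 0 ≤ p (m + 1) * (x (m + 1) - x m) := by
    rw [hxm0, sub_zero]
    exact mul_nonneg (hpos m hm'.2).le (hnn _ (by omega))
  have hle : p (m + 1) * (x (m + 1) - x m) ≤ 0 := by
    have h := hineq m hm
    have h1 := mul_nonneg (hp m (Finset.mem_Icc.2 ⟨hm'.1, by omega⟩)).le (hnn (m - 1) (by omega))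
    rw [hxm0] at h ⊢
    linarith
  intro k hk
  have hk' := Finset.mem_Icc.1 hk
  refine le_antisymm ?_ (hnn k (by omega))
  rcases le_total k m with h | h
  · exact (up m hm'.2 hge k m h (by omega)).trans hxm
  · exact (down m hle m k le_rfl h (by omega)).trans hxm
end

section
/- Assume A1, A3 and A5, and fix u ∈ L_M. Then every x ∈ E solving problem (P_u) is a positive solution: x(k) > 0 for all k = 1,...,T. -/
/-!
By A5 and the equation, the flux `p (k) (x (k) - x (k - 1))` is nonincreasing in `k`, and since
`p > 0` it has the sign of the increment of `x`; so `x` first rises, then falls. If `x k ≤ 0` at an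
interior point, then `x` cannot fall strictly right after `k`, since it would end below `0`. So it is
nondecreasing up to `k`, and `x 1 ≤ x k ≤ 0 = x 0`. Therefore the first increment is nonpositive, `x`
is nonincreasing throughout, and the zero boundary values force `x = 0`, which contradicts the strict
inequality in A5 at `k₁`.
-/

open Finset Filter Topology

theorem antitone_segment (y : ℕ → ℝ) (a b : ℕ)
    (h : ∀ n, a ≤ n → n < b → y (n + 1) ≤ y n) :
    ∀ i j, a ≤ i → i ≤ j → j ≤ b → y j ≤ y i := by
  intro i j hi hij
  induction j, hij using Nat.le_induction with
  | base => exact fun _ => le_rfl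
  | succ n hn ih => exact fun hb => (h n (hi.trans hn) hb).trans (ih (by omega))

/-- under A1, A3 and A5, every solution of `(P_u)` is positive. -/
theorem solutions_positive (T : ℕ) (hT : 1 ≤ T) (M : ℝ) (hM : 0 < M)
    (f : ℕ → ℝ → ℝ → ℝ) (p g : ℕ → ℝ)
    (hA1 : A1 T M f) (hA3 : A3 T p) (hA5 : A5 T M f g)
    (u : ℕ → ℝ) (hu : inLM T M u) :
    ∀ x : ℕ → ℝ, SolvesP T p g f u x → ∀ k ∈ Finset.Icc 1 T, 0 < x k := by
  rintro x ⟨⟨hx0, hxT⟩, hx⟩ k hk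
  have hp : ∀ j, j ≤ T → 0 < p (j + 1) := fun j hj =>
    (Finset.lt_inf'_iff _).mp hA3 (j + 1) (Finset.mem_Icc.mpr ⟨by omega, by omega⟩)
  -- The flux is `p (j + 1) * (x (j + 1) - x j)` for `0 ≤ j ≤ T`; it is indexed by the left endpoint
  -- so that no truncated subtraction occurs.
  have hflux : ∀ j, j < T → p (j + 1 + 1) * (x (j + 1 + 1) - x (j + 1))
      ≤ p (j + 1) * (x (j + 1) - x j) := by
    intro j hj
    have hmem : j + 1 ∈ Finset.Icc 1 T := Finset.mem_Icc.mpr ⟨by omega, by omega⟩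
    have h1 := hx (j + 1) hmem
    have h2 := hA5.1 (j + 1) hmem (x (j + 1)) (u (j + 1)) (hu _ hmem)
    rw [Nat.add_sub_cancel] at h1
    linarith
  have hanti : ∀ i j, i ≤ j → j ≤ T →
      p (j + 1) * (x (j + 1) - x j) ≤ p (i + 1) * (x (i + 1) - x i) := fun i j hij hj =>
    antitone_segment (fun n => p (n + 1) * (x (n + 1) - x n)) 0 T
      (fun n _ hn => hflux n hn) i j (Nat.zero_le _) hij hj
  -- A nonpositive flux at `i` makes `x` nonincreasing from `i` on.
  have hdown : ∀ i, i ≤ T → x (i + 1) ≤ x i → ∀ a b, i ≤ a → a ≤ b → b ≤ T + 1 → x b ≤ x a := by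
    intro i hi hle
    refine antitone_segment x i (T + 1) fun n hin hn => ?_
    have h1 := hanti i n hin (by omega)
    have h2 := mul_nonpos_of_nonneg_of_nonpos (hp i hi).le (sub_nonpos.mpr hle)
    have h3 := nonpos_of_mul_nonpos_right (h1.trans h2) (hp n (by omega))
    linarith
  obtain ⟨hk1, hkT⟩ := Finset.mem_Icc.mp hk
  by_contra! hneg
  -- A strict decrease after `k` would force `x (T + 1) < x k ≤ 0`.
  have hup : x k ≤ x (k + 1) := by
    by_contra! hlt
    have := hdown k hkT hlt.le (k + 1) (T + 1) (by omega) (by omega) le_rfl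
    linarith
  -- Hence the flux is nonnegative up to `k`, and `x` is nondecreasing there.
  have hx1 : x 1 ≤ x k := by
    have := antitone_segment (fun n => - x n) 0 (k + 1) (fun n _ hn => by
      have h1 := hanti n k (by omega) hkT
      have h2 := mul_nonneg (hp k hkT).le (sub_nonneg.mpr hup)
      have h3 := nonneg_of_mul_nonneg_right (h2.trans h1) (hp n (by omega))
      linarith) 1 k (by omega) hk1 (by omega)
    linarith
  -- So the initial flux is nonpositive, and `x` is squeezed between its two zero boundary values.
  have hall := hdown 0 (by omega) (by simpa [hx0] using hx1.trans hneg)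
  have hzero : ∀ i, i ≤ T + 1 → x i = 0 := fun i hi =>
    le_antisymm (hx0 ▸ hall 0 i le_rfl (Nat.zero_le _) hi)
      (hxT ▸ hall i (T + 1) (Nat.zero_le _) hi le_rfl)
  obtain ⟨k₁, hk₁, hpos⟩ := hA5.2
  obtain ⟨h1, h2⟩ := Finset.mem_Icc.mp hk₁
  have h3 := hx k₁ hk₁
  have h4 := hpos (x k₁) (u k₁) (hu _ hk₁)
  rw [hzero (k₁ + 1) (by omega), hzero (k₁ - 1) (by omega)] at h3
  rw [hzero k₁ (by omega)] at h3 h4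
  linarith
end
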